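/- Let 𝓑 be a real symmetric positive definite 2d×2d matrix and C a real 2d×2d matrix admitting the decomposition C = V Λ Vᵀ𝓑 + V⊥ Λ⊥ V⊥ᵀ𝓑, where V ∈ ℝ^{2d×k} and V⊥ ∈ ℝ^{2d×(2d−k)} satisfy Vᵀ𝓑V = I_k, V⊥ᵀ𝓑V⊥ = I_{2d−k}, V⊥ᵀ𝓑V = 0, Λ = diag(μ₁,…,μ_k) and Λ⊥ = diag(μ_{k+1},…,μ_{2d}) with |μ₁| ≥ … ≥ |μ_k| > |μ_{k+1}| ≥ … ≥ |μ_{2d}|, and suppose |μ_k| = (|λ_k| + √(λ_k² − 4β))/2 and |μ_{k+1}| = √β for reals λ_k and β with 4β < λ_k². Let Ȳ₀, Ȳ₁, …, Ȳ_T ∈ ℝ^{2d×k} satisfy Ȳ_tᵀ𝓑Ȳ_t = I_k with Vᵀ𝓑Ȳ_t invertible for all t, and suppose that for each 0 ≤ t < T there exist G_t, R_t ∈ ℝ^{k×k} invertible with ‖G_t^{−1}‖ ≤ 1, H_t ∈ ℝ^{k×k} invertible, and E_t ∈ ℝ^{2d×k} such that Ȳ_{t+1} = (C Ȳ_t G_t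 + Ξ_t) R_t^{−1} H_t with Ξ_t = E_t (placed appropriately) and ‖Ξ_t‖_𝓑 ≤ ((|μ_k| − √β)/4)·min{ sinθ(Ȳ_t, V), cosθ(Ȳ_t, V) }. Then sin²θ(Ȳ_T, V) ≤ ( 1/2 + √β/(|λ_k| + √(λ_k² − 4β)) )^{2T} · tan²θ(Ȳ₀, V). -/

import Mathlib

open Matrix

/-- The spectral norm (largest singular value) of a real rectangular matrix,
realized as the operator norm of the induced map between Euclidean spaces. -/
noncomputable def specNorm {m n : Type*} [Fintype m] [Fintype n] [DecidableEq n]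
    (M : Matrix m n ℝ) : ℝ :=
  ‖LinearMap.toContinuousLinearMap (Matrix.toEuclideanLin M)‖

/-- The smallest singular value of a square real matrix, realized as the infimum of
`‖Mx‖` over unit vectors `x` of the Euclidean space. -/
noncomputable def sminNorm {k : ℕ} (M : Matrix (Fin k) (Fin k) ℝ) : ℝ :=
  sInf {r : ℝ | ∃ x : EuclideanSpace ℝ (Fin k), ‖x‖ = 1 ∧ r = ‖Matrix.toEuclideanLin M x‖}

lemma sqle {a b : ℝ} (h : a ^ 2 ≤ b ^ 2) (hb : 0 ≤ b) : a ≤ b := (le_abs_self a).trans (abs_le_of_sq_le_sq h hb)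

noncomputable def nv {n : Type*} [Fintype n] (v : n → ℝ) : ℝ := ‖WithLp.toLp 2 v‖

lemma nv_nonneg {n : Type*} [Fintype n] (v : n → ℝ) : 0 ≤ nv v := norm_nonneg _

lemma nv_sq {n : Type*} [Fintype n] (v : n → ℝ) : nv v ^ 2 = v ⬝ᵥ v := by
  unfold nv
  rw [EuclideanSpace.norm_sq_eq]
  simp [dotProduct, sq]

lemma nv_add {n : Type*} [Fintype n] (v w : n → ℝ) : nv (v + w) ≤ nv v + nv w := by
  unfold nv
  rw [WithLp.toLp_add]
  exact norm_add_le _ _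

lemma nv_smul {n : Type*} [Fintype n] (c : ℝ) (v : n → ℝ) : nv (c • v) = |c| * nv v := by
  unfold nv
  rw [WithLp.toLp_smul, norm_smul, Real.norm_eq_abs]

lemma nv_sub {n : Type*} [Fintype n] (v w : n → ℝ) : nv v - nv w ≤ nv (v + w) := by
  have h := nv_add (v + w) ((-1 : ℝ) • w)
  rw [nv_smul] at h
  have e : v + w + (-1 : ℝ) • w = v := by simp
  rw [e] at h
  norm_num at h
  linarith

lemma nv_le_spec {m n : Type*} [Fintype m] [Fintype n] [DecidableEq n]
    (M : Matrix m n ℝ) (x : n → ℝ) : nv (M *ᵥ x) ≤ specNorm M * nv x := by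
  have := (LinearMap.toContinuousLinearMap (Matrix.toEuclideanLin M)).le_opNorm (WithLp.toLp 2 x)
  simpa [specNorm, nv, Matrix.toEuclideanLin_toLp] using this

lemma spec_le {m n : Type*} [Fintype m] [Fintype n] [DecidableEq n]
    (M : Matrix m n ℝ) (c : ℝ) (hc : 0 ≤ c) (h : ∀ x, nv (M *ᵥ x) ≤ c * nv x) :
    specNorm M ≤ c := by
  refine ContinuousLinearMap.opNorm_le_bound _ hc fun x => ?_
  have := h (WithLp.ofLp x)
  exact this

lemma smin_le {k : ℕ} (M : Matrix (Fin k) (Fin k) ℝ) (x : Fin k → ℝ) :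
    sminNorm M * nv x ≤ nv (M *ᵥ x) := by
  rcases (nv_nonneg x).eq_or_lt with h0 | h0
  · rw [← h0, mul_zero]; exact nv_nonneg _
  · have hb : sminNorm M ≤ nv (M *ᵥ ((nv x)⁻¹ • x)) := by
      refine csInf_le ⟨0, ?_⟩ ⟨WithLp.toLp 2 ((nv x)⁻¹ • x), ?_, ?_⟩
      · rintro r ⟨x, -, rfl⟩; exact norm_nonneg _
      · change nv _ = 1
        rw [nv_smul, abs_of_pos (inv_pos.2 h0), inv_mul_cancel₀ h0.ne']
      · rw [Matrix.toEuclideanLin_toLp]; rfl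
    rw [Matrix.mulVec_smul, nv_smul, abs_of_pos (inv_pos.2 h0)] at hb
    rw [inv_mul_eq_div] at hb
    exact (le_div_iff₀ h0).1 hb

lemma le_smin {k : ℕ} (hk : 0 < k) (M : Matrix (Fin k) (Fin k) ℝ) (c : ℝ)
    (h : ∀ x, nv x = 1 → c ≤ nv (M *ᵥ x)) : c ≤ sminNorm M := by
  refine le_csInf ⟨_, EuclideanSpace.single ⟨0, hk⟩ (1 : ℝ), by simp, rfl⟩ ?_
  rintro r ⟨x, hx, rfl⟩
  have := h (WithLp.ofLp x) hx
  exact this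

lemma sin_le {m k : ℕ} (hk : 0 < k) (A : Matrix (Fin k) (Fin k) ℝ) (S : Matrix (Fin m) (Fin k) ℝ)
    (hp : ∀ x, nv (A *ᵥ x) ^ 2 + nv (S *ᵥ x) ^ 2 = nv x ^ 2) (τ : ℝ) (hτ : 0 ≤ τ)
    (h : ∀ x, nv (S *ᵥ x) ≤ τ * nv (A *ᵥ x)) : specNorm S ≤ τ * sminNorm A := by
  have hs : 0 < Real.sqrt (1 + τ ^ 2) := Real.sqrt_pos.2 (by positivity)
  have hs2 : Real.sqrt (1 + τ ^ 2) ^ 2 = 1 + τ ^ 2 := Real.sq_sqrt (by positivity)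
  set q := Real.sqrt (1 + τ ^ 2)
  have h2 : ∀ x, nv (S *ᵥ x) ^ 2 ≤ τ ^ 2 * nv (A *ᵥ x) ^ 2 := fun x => by
    rw [← mul_pow]; exact pow_le_pow_left₀ (nv_nonneg _) (h x) 2
  have hc : 1 / q ≤ sminNorm A := by
    refine le_smin hk A _ fun x hx => ?_
    rw [div_le_iff₀ hs]
    have := h2 x
    have := hp x
    rw [hx] at this
    refine sqle ?_ (mul_nonneg (nv_nonneg _) hs.le)
    rw [mul_pow, hs2]; nlinarith
  refine (spec_le S (τ / q) (by positivity) fun x => ?_).trans ?_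
  · rw [div_mul_eq_mul_div, le_div_iff₀ hs]
    refine sqle ?_ (mul_nonneg hτ (nv_nonneg _))
    rw [mul_pow, mul_pow, hs2]
    nlinarith [h2 x, hp x]
  · rw [div_eq_mul_one_div]; gcongr

lemma pyth {n a b : ℕ} (hab : a + b = n) (W : Matrix (Fin n) (Fin a) ℝ) (U : Matrix (Fin n) (Fin b) ℝ)
    (hW : Wᵀ * W = 1) (hU : Uᵀ * U = 1) (hUW : Uᵀ * W = 0) (z : Fin n → ℝ) :
    nv (Wᵀ *ᵥ z) ^ 2 + nv (Uᵀ *ᵥ z) ^ 2 = nv z ^ 2 := by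
  have hWU : Wᵀ * U = 0 := by
    have := congrArg Matrix.transpose hUW
    simpa [Matrix.transpose_mul] using this
  have h1 : (Matrix.fromCols W U)ᵀ * Matrix.fromCols W U = 1 := by
    rw [Matrix.transpose_fromCols, Matrix.fromRows_mul_fromCols, hW, hU, hUW, hWU,
      Matrix.fromBlocks_one]
  have h2 : Matrix.fromCols W U * (Matrix.fromCols W U)ᵀ = 1 := by
    refine (Matrix.mul_eq_one_comm_of_card_eq _ _ _ (by simp; omega)).1 h1
  rw [Matrix.transpose_fromCols, Matrix.fromCols_mul_fromRows] at h2
  rw [nv_sq, nv_sq, nv_sq]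
  have e : ∀ {c : ℕ} (M : Matrix (Fin n) (Fin c) ℝ),
      (Mᵀ *ᵥ z) ⬝ᵥ (Mᵀ *ᵥ z) = z ⬝ᵥ ((M * Mᵀ) *ᵥ z) := fun M => by
    rw [← Matrix.mulVec_mulVec, Matrix.dotProduct_mulVec z, ← Matrix.mulVec_transpose]
  rw [e, e, ← dotProduct_add, ← Matrix.add_mulVec, h2, Matrix.one_mulVec]

lemma nv_diag_le {n : ℕ} (ν : Fin n → ℝ) (g : ℝ) (hg : 0 ≤ g) (h : ∀ i, |ν i| ≤ g) (x : Fin n → ℝ) :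
    nv (Matrix.diagonal ν *ᵥ x) ≤ g * nv x := by
  refine sqle ?_ (mul_nonneg hg (nv_nonneg _))
  rw [mul_pow, nv_sq, nv_sq, dotProduct, dotProduct, Finset.mul_sum]
  refine Finset.sum_le_sum fun i _ => ?_
  rw [Matrix.mulVec_diagonal]
  have : ν i ^ 2 ≤ g ^ 2 := by rw [← sq_abs]; exact pow_le_pow_left₀ (abs_nonneg _) (h i) 2
  nlinarith [mul_self_nonneg (x i)]

lemma le_nv_diag {n : ℕ} (ν : Fin n → ℝ) (g : ℝ) (hg : 0 ≤ g) (h : ∀ i, g ≤ |ν i|) (x : Fin n → ℝ) :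
    g * nv x ≤ nv (Matrix.diagonal ν *ᵥ x) := by
  refine sqle ?_ (nv_nonneg _)
  rw [mul_pow, nv_sq, nv_sq, dotProduct, dotProduct, Finset.mul_sum]
  refine Finset.sum_le_sum fun i _ => ?_
  rw [Matrix.mulVec_diagonal]
  have : g ^ 2 ≤ ν i ^ 2 := by rw [← sq_abs (ν i)]; exact pow_le_pow_left₀ hg (h i) 2
  nlinarith [mul_self_nonneg (x i)]

lemma step_real (m g τ a s e1 e2 : ℝ) (hg : 0 ≤ g) (hgm : g < m) (hτ : 0 ≤ τ) (ha : 0 ≤ a)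
    (he1 : e1 ≤ (m - g) / 4 * a) (he2 : e2 ≤ (m - g) / 4 * (τ * a)) (hs : s ≤ τ * a) (A' S' : ℝ)
    (hA' : m * a - e1 ≤ A') (hS' : S' ≤ g * s + e2) :
    S' ≤ (1 / 2 + g / (2 * m)) * τ * A' := by
  have hm : 0 < m := by linarith
  have h1 : S' ≤ (3 * g + m) / 4 * (τ * a) := by nlinarith
  have h2 : (3 * m + g) / 4 * a ≤ A' := by nlinarith
  have h3 : (3 * g + m) / 4 ≤ (1 / 2 + g / (2 * m)) * ((3 * m + g) / 4) := by
    have : (1 / 2 + g / (2 * m)) = (m + g) / (2 * m) := by field_simp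
    rw [this, div_mul_eq_mul_div, le_div_iff₀ (by positivity)]
    nlinarith [sq_nonneg (m - g)]
  calc S' ≤ (3 * g + m) / 4 * (τ * a) := h1
    _ ≤ ((1 / 2 + g / (2 * m)) * ((3 * m + g) / 4)) * (τ * a) := by gcongr
    _ = (1 / 2 + g / (2 * m)) * τ * ((3 * m + g) / 4 * a) := by ring
    _ ≤ _ := by gcongr

set_option maxHeartbeats 400000

/-- **Theorem 2 (convergence of the top-`k` noisy accelerated power iteration).**
Here `Ssqrt = 𝓑^{1/2}` is the symmetric positive definite square root of `𝓑`, so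
`‖M‖_𝓑 = specNorm (Ssqrt * M)`; `cosθ(Ȳ,V) = σ_k(Vᵀ𝓑Ȳ)`, `sinθ(Ȳ,V) = ‖V⊥ᵀ𝓑Ȳ‖`,
and `tanθ(Ȳ,V) = ‖V⊥ᵀ𝓑Ȳ(Vᵀ𝓑Ȳ)⁻¹‖`.  The moduli satisfy
`|μ_k| = (|λ_k| + √(λ_k² − 4β))/2` and `|μ_{k+1}| = √β` with `4β < λ_k²`.  Iterating
the one-step contraction under the per-iteration error condition yields
`sin²θ(Ȳ_T, V) ≤ (1/2 + √β/(|λ_k| + √(λ_k² − 4β)))^{2T} tan²θ(Ȳ₀, V)`. -/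
theorem topk_napi_convergence
    {d k : ℕ} (hk0 : 0 < k) (hk2d : k < 2 * d)
    (𝓑 C Ssqrt : Matrix (Fin (2 * d)) (Fin (2 * d)) ℝ)
    (h𝓑 : 𝓑.PosDef) (h𝓑sym : 𝓑.IsSymm)
    (hSsqrt : Ssqrt.PosDef) (hSsqrtSym : Ssqrt.IsSymm) (hSsq : Ssqrt * Ssqrt = 𝓑)
    (V : Matrix (Fin (2 * d)) (Fin k) ℝ)
    (Vperp : Matrix (Fin (2 * d)) (Fin (2 * d - k)) ℝ)
    (hV : Vᵀ * 𝓑 * V = 1) (hVperp : Vperpᵀ * 𝓑 * Vperp = 1)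
    (hVV : Vperpᵀ * 𝓑 * V = 0)
    (μ : Fin k → ℝ) (ν : Fin (2 * d - k) → ℝ)
    (hμmono : ∀ i j : Fin k, i ≤ j → |μ j| ≤ |μ i|)
    (hνmono : ∀ i j : Fin (2 * d - k), i ≤ j → |ν j| ≤ |ν i|)
    (hgap : |ν ⟨0, by omega⟩| < |μ ⟨k - 1, by omega⟩|)
    (hC : C = V * Matrix.diagonal μ * Vᵀ * 𝓑 + Vperp * Matrix.diagonal ν * Vperpᵀ * 𝓑)
    (lamk β : ℝ) (hβ : 0 < β) (hβlam : 4 * β < lamk ^ 2)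
    (hμk : |μ ⟨k - 1, by omega⟩| = (|lamk| + Real.sqrt (lamk ^ 2 - 4 * β)) / 2)
    (hνk : |ν ⟨0, by omega⟩| = Real.sqrt β)
    (T : ℕ) (Ybar : ℕ → Matrix (Fin (2 * d)) (Fin k) ℝ)
    (hYbar : ∀ t ≤ T, (Ybar t)ᵀ * 𝓑 * Ybar t = 1 ∧ IsUnit (Vᵀ * 𝓑 * Ybar t).det)
    (hstep : ∀ t < T,
      ∃ (G R H : Matrix (Fin k) (Fin k) ℝ) (Ξ : Matrix (Fin (2 * d)) (Fin k) ℝ),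
        IsUnit G.det ∧ specNorm G⁻¹ ≤ 1 ∧ IsUnit R.det ∧ IsUnit H.det ∧
        Ybar (t + 1) = (C * Ybar t * G + Ξ) * R⁻¹ * H ∧
        specNorm (Ssqrt * Ξ) ≤
          (|μ ⟨k - 1, by omega⟩| - Real.sqrt β) / 4 *
            min (specNorm (Vperpᵀ * 𝓑 * Ybar t)) (sminNorm (Vᵀ * 𝓑 * Ybar t))) :
    specNorm (Vperpᵀ * 𝓑 * Ybar T) ^ 2 ≤
      (1 / 2 + Real.sqrt β / (|lamk| + Real.sqrt (lamk ^ 2 - 4 * β))) ^ (2 * T) *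
        specNorm (Vperpᵀ * 𝓑 * Ybar 0 * (Vᵀ * 𝓑 * Ybar 0)⁻¹) ^ 2 := by
  have hSt : Ssqrtᵀ = Ssqrt := hSsqrtSym
  have hBt : 𝓑ᵀ = 𝓑 := h𝓑sym
  have cross : ∀ {a b : ℕ} (M : Matrix (Fin (2 * d)) (Fin a) ℝ) (N : Matrix (Fin (2 * d)) (Fin b) ℝ),
      (Ssqrt * M)ᵀ * (Ssqrt * N) = Mᵀ * 𝓑 * N := fun M N => by
    rw [Matrix.transpose_mul, hSt, ← hSsq]; simp only [Matrix.mul_assoc]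
  have hp : ∀ (N : Matrix (Fin (2 * d)) (Fin k) ℝ) (x : Fin k → ℝ),
      nv ((Vᵀ * 𝓑 * N) *ᵥ x) ^ 2 + nv ((Vperpᵀ * 𝓑 * N) *ᵥ x) ^ 2
        = nv ((Ssqrt * N) *ᵥ x) ^ 2 := fun N x => by
    rw [← cross, ← cross, ← Matrix.mulVec_mulVec x (Ssqrt * V)ᵀ (Ssqrt * N),
      ← Matrix.mulVec_mulVec x (Ssqrt * Vperp)ᵀ (Ssqrt * N)]
    exact pyth (by omega) (Ssqrt * V) (Ssqrt * Vperp) (by rw [cross, hV]) (by rw [cross, hVperp]) (by rw [cross, hVV]) _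
  have hpY : ∀ t ≤ T, ∀ x : Fin k → ℝ,
      nv ((Vᵀ * 𝓑 * Ybar t) *ᵥ x) ^ 2 + nv ((Vperpᵀ * 𝓑 * Ybar t) *ᵥ x) ^ 2
        = nv x ^ 2 := fun t ht x => by
    rw [hp, nv_sq, nv_sq, Matrix.dotProduct_mulVec, ← Matrix.mulVec_transpose,
      Matrix.mulVec_mulVec, cross, (hYbar t ht).1, Matrix.one_mulVec]
  have hVVt : Vᵀ * 𝓑 * Vperp = 0 := by
    have := congrArg Matrix.transpose hVV
    simpa [Matrix.transpose_mul, hBt, Matrix.mul_assoc] using this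
  have hVC : ∀ N : Matrix (Fin (2 * d)) (Fin k) ℝ,
      Vᵀ * 𝓑 * (C * N) = Matrix.diagonal μ * (Vᵀ * 𝓑 * N) := fun N => by
    have : Vᵀ * 𝓑 * (C * N) = (Vᵀ * 𝓑 * V) * Matrix.diagonal μ * (Vᵀ * 𝓑 * N)
        + (Vᵀ * 𝓑 * Vperp) * Matrix.diagonal ν * (Vperpᵀ * 𝓑 * N) := by
      rw [hC]; simp only [Matrix.mul_add, Matrix.add_mul, Matrix.mul_assoc]
    rw [this, hV, hVVt]; simp
  have hUC : ∀ N : Matrix (Fin (2 * d)) (Fin k) ℝ,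
      Vperpᵀ * 𝓑 * (C * N) = Matrix.diagonal ν * (Vperpᵀ * 𝓑 * N) := fun N => by
    have : Vperpᵀ * 𝓑 * (C * N) = (Vperpᵀ * 𝓑 * V) * Matrix.diagonal μ * (Vᵀ * 𝓑 * N)
        + (Vperpᵀ * 𝓑 * Vperp) * Matrix.diagonal ν * (Vperpᵀ * 𝓑 * N) := by
      rw [hC]; simp only [Matrix.mul_add, Matrix.add_mul, Matrix.mul_assoc]
    rw [this, hVperp, hVV]; simp
  have hμ : ∀ i, |μ ⟨k - 1, by omega⟩| ≤ |μ i| := fun i =>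
    hμmono _ _ (Fin.le_def.2 (by have := i.2; simp; omega))
  have hν : ∀ i, |ν i| ≤ Real.sqrt β := fun i => by
    rw [← hνk]; exact hνmono _ _ (Fin.le_def.2 (by simp))
  have hg : 0 ≤ Real.sqrt β := Real.sqrt_nonneg β
  rw [hνk] at hgap
  have hρ : |lamk| + Real.sqrt (lamk ^ 2 - 4 * β) = 2 * |μ ⟨k - 1, by omega⟩| := by
    rw [hμk]; ring
  rw [hρ]
  generalize |μ ⟨k - 1, by omega⟩| = m at *
  generalize Real.sqrt β = g at *
  have hm : 0 < m := by linarith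
  set ρ := 1 / 2 + g / (2 * m) with hρdef
  have hρ0 : 0 ≤ ρ := by positivity
  set τ := specNorm (Vperpᵀ * 𝓑 * Ybar 0 * (Vᵀ * 𝓑 * Ybar 0)⁻¹) with hτdef
  have hτ : 0 ≤ τ := norm_nonneg _
  have key : ∀ t ≤ T, ∀ x, nv ((Vperpᵀ * 𝓑 * Ybar t) *ᵥ x)
      ≤ ρ ^ t * τ * nv ((Vᵀ * 𝓑 * Ybar t) *ᵥ x) := by
    intro t
    induction t with
    | zero =>
      intro h0 x
      have := nv_le_spec (Vperpᵀ * 𝓑 * Ybar 0 * (Vᵀ * 𝓑 * Ybar 0)⁻¹)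
        ((Vᵀ * 𝓑 * Ybar 0) *ᵥ x)
      rw [Matrix.mulVec_mulVec, Matrix.mul_assoc _ _ (Vᵀ * 𝓑 * Ybar 0),
        Matrix.nonsing_inv_mul _ (hYbar 0 h0).2, Matrix.mul_one] at this
      simpa using this
    | succ t ih =>
      intro ht x
      have ih := ih (by omega)
      obtain ⟨G, R, H, Ξ, hG, hGn, -, -, hY, hΞ⟩ := hstep t (by omega)
      have hτt : 0 ≤ ρ ^ t * τ := by positivity
      have hsin := sin_le hk0 _ _ (hpY t (by omega)) _ hτt ih
      have hmul : ∀ {a : ℕ} (M : Matrix (Fin a) (Fin (2 * d)) ℝ),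
          (M * Ybar (t + 1)) *ᵥ x
          = (M * (C * Ybar t)) *ᵥ (G *ᵥ ((R⁻¹ * H) *ᵥ x)) + (M * Ξ) *ᵥ ((R⁻¹ * H) *ᵥ x) :=
        fun M => by
          rw [hY]
          simp only [Matrix.mulVec_mulVec, ← Matrix.add_mulVec]
          simp only [Matrix.mul_add, Matrix.add_mul, Matrix.mul_assoc]
      rw [hmul, hmul, hVC, hUC]
      set z := (R⁻¹ * H) *ᵥ x
      set w := G *ᵥ z with hw
      have hz : nv z ≤ nv w := by
        have h1 := nv_le_spec G⁻¹ w
        rw [hw, Matrix.mulVec_mulVec, Matrix.nonsing_inv_mul _ hG, Matrix.one_mulVec] at h1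
        exact h1.trans (mul_le_of_le_one_left (nv_nonneg _) hGn)
      have hδ : 0 ≤ (m - g) / 4 := by linarith
      have hE := nv_le_spec (Ssqrt * Ξ) z
      have hE' : nv ((Ssqrt * Ξ) *ᵥ z) ≤ specNorm (Ssqrt * Ξ) * nv w :=
        hE.trans (mul_le_mul_of_nonneg_left hz (norm_nonneg _))
      have hcw := smin_le (Vᵀ * 𝓑 * Ybar t) w
      have hE1 : nv ((Ssqrt * Ξ) *ᵥ z) ≤ (m - g) / 4 * nv ((Vᵀ * 𝓑 * Ybar t) *ᵥ w) := by
        refine hE'.trans ((mul_le_mul_of_nonneg_right (hΞ.trans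
          (mul_le_mul_of_nonneg_left (min_le_right _ _) hδ)) (nv_nonneg w)).trans ?_)
        rw [mul_assoc]; exact mul_le_mul_of_nonneg_left hcw hδ
      have hE2 : nv ((Ssqrt * Ξ) *ᵥ z)
          ≤ (m - g) / 4 * (ρ ^ t * τ * nv ((Vᵀ * 𝓑 * Ybar t) *ᵥ w)) := by
        refine hE'.trans ((mul_le_mul_of_nonneg_right (hΞ.trans
          (mul_le_mul_of_nonneg_left ((min_le_left _ _).trans hsin) hδ)) (nv_nonneg w)).trans ?_)
        rw [mul_assoc, mul_assoc (ρ ^ t * τ)]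
        exact mul_le_mul_of_nonneg_left (mul_le_mul_of_nonneg_left hcw hτt) hδ
      have hX := hp Ξ z
      have hX1 : nv ((Vᵀ * 𝓑 * Ξ) *ᵥ z) ≤ nv ((Ssqrt * Ξ) *ᵥ z) :=
        sqle (by nlinarith [sq_nonneg (nv ((Vperpᵀ * 𝓑 * Ξ) *ᵥ z))]) (nv_nonneg _)
      have hX2 : nv ((Vperpᵀ * 𝓑 * Ξ) *ᵥ z) ≤ nv ((Ssqrt * Ξ) *ᵥ z) :=
        sqle (by nlinarith [sq_nonneg (nv ((Vᵀ * 𝓑 * Ξ) *ᵥ z))]) (nv_nonneg _)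
      rw [← Matrix.mulVec_mulVec w (Matrix.diagonal ν), ← Matrix.mulVec_mulVec w (Matrix.diagonal μ)]
      have hfin := step_real m g (ρ ^ t * τ) (nv ((Vᵀ * 𝓑 * Ybar t) *ᵥ w))
        (nv ((Vperpᵀ * 𝓑 * Ybar t) *ᵥ w)) (nv ((Vᵀ * 𝓑 * Ξ) *ᵥ z))
        (nv ((Vperpᵀ * 𝓑 * Ξ) *ᵥ z)) hg hgap hτt (nv_nonneg _) (hX1.trans hE1) (hX2.trans hE2)
        (ih w) _ _
        ((sub_le_sub_right (le_nv_diag μ m hm.le hμ _) _).trans (nv_sub _ _))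
        ((nv_add _ _).trans (add_le_add_left (nv_diag_le ν g hg hν _) _))
      refine hfin.trans (le_of_eq ?_)
      rw [← hρdef]; ring
  have hfin : specNorm (Vperpᵀ * 𝓑 * Ybar T) ≤ ρ ^ T * τ := by
    refine spec_le _ _ (by positivity) fun x => (key T le_rfl x).trans ?_
    have := hpY T le_rfl x
    refine mul_le_mul_of_nonneg_left (sqle ?_ (nv_nonneg _)) (by positivity)
    nlinarith [sq_nonneg (nv ((Vperpᵀ * 𝓑 * Ybar T) *ᵥ x))]
  calc _ ≤ (ρ ^ T * τ) ^ 2 := pow_le_pow_left₀ (norm_nonneg _) hfin 2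
    _ = _ := by rw [mul_pow, ← pow_mul, mul_comm T 2]
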